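/- arXiv:1011.4362 — 2 statements merged into one kernel-verified Lean document; each statement's English description precedes it below -/
import Mathlib

section
/- Let X_BR := ΞLΦ and assume X_BRᵀΦ (= ΦᵀLᵀΞΦ) is invertible, so that the oblique projection Π_{X_BR} := Φ(X_BRᵀΦ)⁻¹X_BRᵀ is well defined. Then the Bellman-residual minimizer v̂_BR := Φ w_BR with w_BR = ((LΦ)ᵀΞLΦ)⁻¹(LΦ)ᵀΞ r satisfies the projected Bellman equation v̂_BR = Π_{X_BR}(T v̂_BR). -/
open Matrix

/-!
Least squares for `L Φ w ≈ r` and the projected Bellman equation are Galerkin conditions with the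
same test matrix. Write `L = 1 - M` and `v = Φ w`. The normal equations say that `r - L v` is
annihilated by `(L Φ)ᴴ W = (W L Φ)ᴴ`; the projected equation says that `(r + M v) - v` is
annihilated by `(W L Φ)ᴴ`; and the two residuals coincide. Invertibility of `(W L Φ)ᴴ Φ` forces
`L Φ` to be injective, so that the normal equations determine `w`.
-/

section Galerkin

variable {R n m : Type*} [CommRing R] [Fintype n] [Fintype m] [DecidableEq m]

/-- The coefficients `w` of the Galerkin approximation `A w` of `u`, the approximation whose error
is annihilated by the test matrix `Z`. The rows of `Z` are the test functionals, and the matrix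
inverse is meaningful only when `Z * A` is invertible. -/
noncomputable def galerkinCoeff (A : Matrix n m R) (Z : Matrix m n R) (u : n → R) : m → R :=
  ((Z * A)⁻¹ * Z) *ᵥ u

/-- The projection onto the column space of `Φ` along the kernel of `Z`, for `Z * Φ` invertible.
The paper's `Π_Y` is the case `Z = Yᵀ`. -/
noncomputable def obliqueProjection (Φ : Matrix n m R) (Z : Matrix m n R) : Matrix n n R :=
  Φ * (Z * Φ)⁻¹ * Z

theorem obliqueProjection_mulVec (Φ : Matrix n m R) (Z : Matrix m n R) (u : n → R) :
    obliqueProjection Φ Z *ᵥ u = Φ *ᵥ galerkinCoeff Φ Z u := by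
  rw [obliqueProjection, galerkinCoeff, mulVec_mulVec, Matrix.mul_assoc]

theorem eq_galerkinCoeff_iff {A : Matrix n m R} {Z : Matrix m n R} (hZA : IsUnit (Z * A))
    {u : n → R} {w : m → R} :
    w = galerkinCoeff A Z u ↔ Z *ᵥ (u - A *ᵥ w) = 0 := by
  have hdet : IsUnit (Z * A).det := (isUnit_iff_isUnit_det _).mp hZA
  calc w = galerkinCoeff A Z u
      ↔ (Z * A) *ᵥ w = (Z * A) *ᵥ galerkinCoeff A Z u :=
        (mulVec_injective_of_isUnit hZA).eq_iff.symm
    _ ↔ Z *ᵥ (A *ᵥ w) = Z *ᵥ u := by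
        rw [galerkinCoeff, mulVec_mulVec, mul_nonsing_inv_cancel_left _ _ hdet, mulVec_mulVec]
    _ ↔ Z *ᵥ (u - A *ᵥ w) = 0 := by
        rw [mulVec_sub, sub_eq_zero, eq_comm]

theorem mulVec_galerkinCoeff_eq_obliqueProjection [DecidableEq n] {M : Matrix n n R}
    {Φ : Matrix n m R} {Z : Matrix m n R} (hZΦ : IsUnit (Z * Φ))
    (hZL : IsUnit (Z * ((1 - M) * Φ))) (r : n → R) :
    let v := Φ *ᵥ galerkinCoeff ((1 - M) * Φ) Z r
    v = obliqueProjection Φ Z *ᵥ (r + M *ᵥ v) := by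
  intro v
  have residual_eq : r - ((1 - M) * Φ) *ᵥ galerkinCoeff ((1 - M) * Φ) Z r = r + M *ᵥ v - v := by
    rw [← mulVec_mulVec, sub_mulVec, one_mulVec]
    abel
  have orthogonality : Z *ᵥ (r + M *ᵥ v - v) = 0 :=
    residual_eq ▸ (eq_galerkinCoeff_iff hZL).mp rfl
  rw [obliqueProjection_mulVec, ← (eq_galerkinCoeff_iff hZΦ).mpr orthogonality]

end Galerkin

section LeastSquares

variable {R n m : Type*} [CommRing R] [StarRing R] [Fintype n] [Fintype m] [DecidableEq m]

/-- The solution of the normal equations `(Aᴴ W A) w = Aᴴ W r`, which minimizes the `W`-weighted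
norm of `r - A w` when `W` is positive definite and `A` has independent columns. -/
noncomputable def weightedLeastSquares (W : Matrix n n R) (A : Matrix n m R) (r : n → R) : m → R :=
  ((Aᴴ * W * A)⁻¹ * Aᴴ * W) *ᵥ r

/-- The Bellman-residual minimizer `v̂_BR` in the column space of `Φ`, for the Bellman operator
`v ↦ r + M v` (in the paper `M = γ P`) and the weight matrix `W` (in the paper `Ξ`). -/
noncomputable def bellmanResidualMinimizer [DecidableEq n] (W M : Matrix n n R)
    (Φ : Matrix n m R) (r : n → R) : n → R :=
  Φ *ᵥ weightedLeastSquares W ((1 - M) * Φ) r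

theorem weightedLeastSquares_eq_galerkinCoeff {W : Matrix n n R} (hW : W.IsHermitian)
    (A : Matrix n m R) (r : n → R) :
    weightedLeastSquares W A r = galerkinCoeff A (W * A)ᴴ r := by
  rw [weightedLeastSquares, galerkinCoeff, conjTranspose_mul, hW.eq, Matrix.mul_assoc _ Aᴴ W]

end LeastSquares

theorem mulVec_injective_of_isUnit_mul {R n m : Type*} [Semiring R] [Fintype n] [Fintype m]
    [DecidableEq m] {B : Matrix m n R} {A : Matrix n m R} (hBA : IsUnit (B * A)) :
    Function.Injective A.mulVec := by
  refine .of_comp (f := B.mulVec) ?_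
  simpa only [Function.comp_def, mulVec_mulVec] using mulVec_injective_of_isUnit hBA

section PositiveDefinite

variable {K n m : Type*} [Field K] [PartialOrder K] [StarRing K] [Fintype n] [Fintype m]
  [DecidableEq m]

theorem isUnit_conjTranspose_mul_mul_of_posDef {W : Matrix n n K} (hW : W.PosDef)
    {A : Matrix n m K} (hA : Function.Injective A.mulVec) : IsUnit ((W * A)ᴴ * A) := by
  rw [conjTranspose_mul, hW.isHermitian.eq]
  exact (hW.conjTranspose_mul_mul_same hA).isUnit

theorem stmt_10_general [DecidableEq n] {W : Matrix n n K} (hW : W.PosDef) (M : Matrix n n K)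
    (Φ : Matrix n m K) (hΦ : IsUnit ((W * (1 - M) * Φ)ᴴ * Φ)) (r : n → K) :
    bellmanResidualMinimizer W M Φ r = obliqueProjection Φ (W * (1 - M) * Φ)ᴴ *ᵥ
      (r + M *ᵥ bellmanResidualMinimizer W M Φ r) := by
  rw [Matrix.mul_assoc] at hΦ ⊢
  have hinj : Function.Injective ((1 - M) * Φ).mulVec := by
    refine mulVec_injective_of_isUnit_mul (B := Φᴴ * W) ?_
    rw [← isUnit_conjTranspose] at hΦ
    simpa only [conjTranspose_mul, conjTranspose_conjTranspose, Matrix.mul_assoc] using hΦ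
  rw [bellmanResidualMinimizer, weightedLeastSquares_eq_galerkinCoeff hW.isHermitian]
  exact mulVec_galerkinCoeff_eq_obliqueProjection hΦ
    (isUnit_conjTranspose_mul_mul_of_posDef hW hinj) r

end PositiveDefinite

theorem stmt_10 (N m : ℕ) (hm : 0 < m) (hmN : m ≤ N)
    (P : Matrix (Fin N) (Fin N) ℝ)
    (hP0 : ∀ i j, 0 ≤ P i j) (hP1 : ∀ i, ∑ j, P i j = 1)
    (γ : ℝ) (hγ0 : 0 < γ) (hγ1 : γ < 1)
    (r : Fin N → ℝ)
    (T : (Fin N → ℝ) → Fin N → ℝ) (hT : ∀ v, T v = r + γ • P.mulVec v)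
    (L : Matrix (Fin N) (Fin N) ℝ) (hL : L = 1 - γ • P)
    (ξ : Fin N → ℝ) (hξ : ∀ i, 0 < ξ i)
    (Φ : Matrix (Fin N) (Fin m) ℝ) (hΦ : Function.Injective Φ.mulVec)
    (XBR : Matrix (Fin N) (Fin m) ℝ) (hXBR : XBR = Matrix.diagonal ξ * L * Φ)
    (hinv : IsUnit (XBRᵀ * Φ))
    (wBR : Fin m → ℝ)
    (hwBR : wBR = (((L * Φ)ᵀ * Matrix.diagonal ξ * (L * Φ))⁻¹ * (L * Φ)ᵀ *
      Matrix.diagonal ξ).mulVec r)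
    (vBR : Fin N → ℝ) (hvBR : vBR = Φ.mulVec wBR) :
    vBR = (Φ * (XBRᵀ * Φ)⁻¹ * XBRᵀ).mulVec (T vBR) := by
  subst hL hXBR hwBR hvBR
  simpa only [bellmanResidualMinimizer, weightedLeastSquares, obliqueProjection,
    conjTranspose_eq_transpose_of_trivial, smul_mulVec, hT] using
    stmt_10_general (PosDef.diagonal hξ) (γ • P) Φ hinv r
end

section
/- Suppose m = N − 1 (the feature space has codimension 1). Let X be an N×m real matrix such that XᵀΦ and XᵀLΦ are invertible. For a reward r ∈ ℝ^N write v*(r) := L⁻¹ r and v̂_X(r) := Φ(XᵀLΦ)⁻¹Xᵀ r. Then the error ratio is independent of the reward: for any two rewards r₁, r₂ whose values v*(r₁), v*(r₂) do not lie in the column space of Φ, ‖v*(r₁) − v̂_X(r₁)‖_ξ / ‖v*(r₁) − Π v*(r₁)‖_ξ = ‖v*(r₂) − v̂_X(r₂)‖_ξ / ‖v*(r₂) − Π v*(r₂)‖_ξ. -/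
open Matrix

/-- The ξ-weighted quadratic norm on ℝ^N: ‖x‖_ξ = √(Σ_i ξ_i x_i²). -/
noncomputable def wnorm {N : ℕ} (ξ : Fin N → ℝ) (x : Fin N → ℝ) : ℝ :=
  Real.sqrt (∑ i, ξ i * (x i) ^ 2)

/-!
On a space with a hyperplane `W`, a linear map vanishing on `W` is determined by its value at a
single vector `v₁ ∉ W`: any other `v₂ ∉ W` is `w + c • v₁` with `w ∈ W` and `c ≠ 0`, and its image
is `c` times that of `v₁`. The errors `v ↦ v - v̂_X` and `v ↦ v - Π v` are both such maps for
`W = range Φ`, because `v̂_X` is an oblique projection of `v = L⁻¹ r` onto `W`. The factor `|c|`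
therefore cancels in the ratio of their norms.
-/

section Hyperplane

variable {K E F : Type*} [AddCommGroup E] [AddCommGroup F]

theorem exists_add_smul_eq_of_isCoatom [DivisionRing K] [Module K E] {W : Submodule K E}
    (hW : IsCoatom W) {v₁ v₂ : E} (h₁ : v₁ ∉ W) (h₂ : v₂ ∉ W) :
    ∃ w ∈ W, ∃ c : K, c ≠ 0 ∧ w + c • v₁ = v₂ := by
  have hsup : W ⊔ K ∙ v₁ = ⊤ :=
    (Submodule.isCompl_span_singleton_of_isCoatom_of_notMem hW h₁).sup_eq_top
  obtain ⟨w, hw, u, hu, rfl⟩ := Submodule.mem_sup.mp (hsup ▸ Submodule.mem_top : v₂ ∈ W ⊔ K ∙ v₁)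
  obtain ⟨c, rfl⟩ := Submodule.mem_span_singleton.mp hu
  refine ⟨w, hw, c, ?_, rfl⟩
  rintro rfl
  exact h₂ (by simpa using hw)

theorem div_apply_eq_div_apply_of_isCoatom [NormedField K] [Module K E] [Module K F]
    {W : Submodule K E} (hW : IsCoatom W) {S T : E →ₗ[K] F} (hS : W ≤ S.ker) (hT : W ≤ T.ker)
    {ν : F → ℝ} (hν : ∀ (c : K) x, ν (c • x) = ‖c‖ * ν x) {v₁ v₂ : E}
    (h₁ : v₁ ∉ W) (h₂ : v₂ ∉ W) :
    ν (S v₁) / ν (T v₁) = ν (S v₂) / ν (T v₂) := by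
  obtain ⟨w, hw, c, hc, rfl⟩ := exists_add_smul_eq_of_isCoatom hW h₁ h₂
  have hSw : S w = 0 := hS hw
  have hTw : T w = 0 := hT hw
  simp only [map_add, map_smul, hSw, hTw, zero_add, hν]
  exact (mul_div_mul_left _ _ (norm_ne_zero_iff.mpr hc)).symm

end Hyperplane

section ObliqueProjection

variable {K n k : Type*} [Fintype n] [Fintype k]

theorem isCoatom_range_mulVecLin [Field K] (hcard : Fintype.card n = Fintype.card k + 1)
    {Φ : Matrix n k K} (hΦ : Function.Injective Φ.mulVec) :
    IsCoatom (LinearMap.range Φ.mulVecLin) := by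
  rw [← isSimpleModule_iff_isCoatom, isSimpleModule_iff_finrank_eq_one]
  have hrange : Module.finrank K (LinearMap.range Φ.mulVecLin) = Fintype.card k := by
    rw [LinearMap.finrank_range_of_inj hΦ, Module.finrank_fintype_fun_eq_card]
  have hquot := (LinearMap.range Φ.mulVecLin).finrank_quotient_add_finrank
  rw [hrange, Module.finrank_fintype_fun_eq_card] at hquot
  omega

variable [CommRing K] [DecidableEq k]

theorem mulVec_injective_of_isUnit_mul_s19 {Φ : Matrix n k K} {Y : Matrix k n K}
    (hY : IsUnit (Y * Φ)) : Function.Injective Φ.mulVec := by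
  refine Function.Injective.of_comp (f := Y.mulVec) ?_
  simpa only [Function.comp_def, mulVec_mulVec] using mulVec_injective_of_isUnit hY

/-- The oblique projection onto the column space of `Φ` along the kernel of `Y`, meaningful when
`Y * Φ` is invertible. The orthogonal projection for a weight `Ξ` is the case `Y = Φᵀ * Ξ`. -/
noncomputable def obliqueProj (Φ : Matrix n k K) (Y : Matrix k n K) : Matrix n n K :=
  Φ * (Y * Φ)⁻¹ * Y

theorem obliqueProj_mul_self {Φ : Matrix n k K} {Y : Matrix k n K} (hY : IsUnit (Y * Φ)) :
    obliqueProj Φ Y * Φ = Φ := by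
  rw [obliqueProj, Matrix.mul_assoc, Matrix.mul_assoc,
    nonsing_inv_mul _ ((isUnit_iff_isUnit_det _).mp hY), Matrix.mul_one]

variable [DecidableEq n]

theorem range_mulVecLin_le_ker_one_sub_obliqueProj {Φ : Matrix n k K} {Y : Matrix k n K}
    (hY : IsUnit (Y * Φ)) :
    LinearMap.range Φ.mulVecLin ≤ LinearMap.ker (1 - obliqueProj Φ Y).mulVecLin := by
  rw [LinearMap.range_le_ker_iff, ← mulVecLin_mul, Matrix.sub_mul, Matrix.one_mul,
    obliqueProj_mul_self hY, sub_self, mulVecLin_zero]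

theorem obliqueProj_mul_mul_inv (Φ : Matrix n k K) (Z : Matrix k n K) {L : Matrix n n K}
    (hL : IsUnit L) : obliqueProj Φ (Z * L) * L⁻¹ = Φ * (Z * L * Φ)⁻¹ * Z := by
  rw [obliqueProj, Matrix.mul_assoc,
    mul_nonsing_inv_cancel_right _ _ ((isUnit_iff_isUnit_det L).mp hL)]

end ObliqueProjection

theorem isUnit_one_sub_of_sum_row_norm_lt_one {K n : Type*} [NormedField K] [Fintype n]
    [DecidableEq n] {A : Matrix n n K} (hA : ∀ i, ∑ j, ‖A i j‖ < 1) : IsUnit (1 - A) := by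
  rw [isUnit_iff_isUnit_det, isUnit_iff_ne_zero]
  refine det_ne_zero_of_sum_row_lt_diag fun i => ?_
  calc ∑ j ∈ Finset.univ.erase i, ‖(1 - A) i j‖
      = ∑ j ∈ Finset.univ.erase i, ‖A i j‖ := Finset.sum_congr rfl fun j hj => by
        simp [one_apply_ne (Finset.ne_of_mem_erase hj).symm]
    _ < 1 - ‖A i i‖ := by
        linarith [hA i, Finset.add_sum_erase _ (fun j => ‖A i j‖) (Finset.mem_univ i)]
    _ ≤ ‖(1 - A) i i‖ := by
        simpa using norm_sub_norm_le (1 : K) (A i i)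

theorem isUnit_one_sub_smul_of_mem_rowStochastic {n : Type*} [Fintype n] [DecidableEq n]
    {P : Matrix n n ℝ} (hP : P ∈ rowStochastic ℝ n) {γ : ℝ} (hγ : |γ| < 1) :
    IsUnit (1 - γ • P) := by
  refine isUnit_one_sub_of_sum_row_norm_lt_one fun i => ?_
  have hentry (j : n) : ‖(γ • P) i j‖ = |γ| * P i j := by
    simp [abs_of_nonneg (nonneg_of_mem_rowStochastic hP)]
  simpa only [hentry, ← Finset.mul_sum, sum_row_of_mem_rowStochastic hP, mul_one] using hγ

theorem isUnit_transpose_mul_mul_same_of_posDef {n k : Type*} [Fintype n] [Fintype k]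
    [DecidableEq k] {M : Matrix n n ℝ} (hM : M.PosDef) {Φ : Matrix n k ℝ}
    (hΦ : Function.Injective Φ.mulVec) : IsUnit (Φᵀ * M * Φ) := by
  simpa only [conjTranspose_eq_transpose_of_trivial] using
    (hM.conjTranspose_mul_mul_same hΦ).isUnit

theorem wnorm_smul {N : ℕ} (ξ : Fin N → ℝ) (c : ℝ) (x : Fin N → ℝ) :
    wnorm ξ (c • x) = ‖c‖ * wnorm ξ x := by
  have hsum : ∑ i, ξ i * (c • x) i ^ 2 = c ^ 2 * ∑ i, ξ i * x i ^ 2 := by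
    simp only [Finset.mul_sum, Pi.smul_apply, smul_eq_mul, mul_pow, mul_left_comm]
  rw [wnorm, hsum, Real.sqrt_mul (sq_nonneg c), Real.sqrt_sq_eq_abs, Real.norm_eq_abs, wnorm]

theorem stmt_19_general {K n k : Type*} [NormedField K] [Fintype n] [DecidableEq n] [Fintype k]
    [DecidableEq k] (hcard : Fintype.card n = Fintype.card k + 1) {ν : (n → K) → ℝ}
    (hν : ∀ (c : K) x, ν (c • x) = ‖c‖ * ν x) {L : Matrix n n K} (hL : IsUnit L)
    {Φ X : Matrix n k K} (hX : IsUnit (Xᵀ * L * Φ))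
    {Y : Matrix k n K} (hY : IsUnit (Y * Φ)) {r₁ r₂ : n → K}
    (h₁ : ¬ ∃ w, L⁻¹ *ᵥ r₁ = Φ *ᵥ w) (h₂ : ¬ ∃ w, L⁻¹ *ᵥ r₂ = Φ *ᵥ w) :
    ν (L⁻¹ *ᵥ r₁ - (Φ * (Xᵀ * L * Φ)⁻¹ * Xᵀ) *ᵥ r₁) /
        ν (L⁻¹ *ᵥ r₁ - obliqueProj Φ Y *ᵥ (L⁻¹ *ᵥ r₁)) =
      ν (L⁻¹ *ᵥ r₂ - (Φ * (Xᵀ * L * Φ)⁻¹ * Xᵀ) *ᵥ r₂) /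
        ν (L⁻¹ *ᵥ r₂ - obliqueProj Φ Y *ᵥ (L⁻¹ *ᵥ r₂)) := by
  have hW : IsCoatom (LinearMap.range Φ.mulVecLin) :=
    isCoatom_range_mulVecLin hcard (mulVec_injective_of_isUnit_mul_s19 hY)
  have hmem (v : n → K) : v ∈ LinearMap.range Φ.mulVecLin ↔ ∃ w, v = Φ *ᵥ w := by
    simp only [LinearMap.mem_range, mulVecLin_apply, eq_comm]
  rw [← hmem] at h₁ h₂
  have hratio := div_apply_eq_div_apply_of_isCoatom hW
    (range_mulVecLin_le_ker_one_sub_obliqueProj hX)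
    (range_mulVecLin_le_ker_one_sub_obliqueProj hY) hν h₁ h₂
  simpa only [mulVecLin_apply, mulVec_mulVec, Matrix.sub_mul, Matrix.one_mul, sub_mulVec,
    obliqueProj_mul_mul_inv Φ Xᵀ hL] using hratio

theorem stmt_19 (N m : ℕ) (hm : 0 < m) (hmN : m = N - 1)
    (P : Matrix (Fin N) (Fin N) ℝ)
    (hP0 : ∀ i j, 0 ≤ P i j) (hP1 : ∀ i, ∑ j, P i j = 1)
    (γ : ℝ) (hγ0 : 0 < γ) (hγ1 : γ < 1)
    (L : Matrix (Fin N) (Fin N) ℝ) (hL : L = 1 - γ • P)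
    (ξ : Fin N → ℝ) (hξ : ∀ i, 0 < ξ i)
    (Φ : Matrix (Fin N) (Fin m) ℝ) (hΦ : Function.Injective Φ.mulVec)
    (Pr : Matrix (Fin N) (Fin N) ℝ)
    (hPr : Pr = Φ * (Φᵀ * Matrix.diagonal ξ * Φ)⁻¹ * Φᵀ * Matrix.diagonal ξ)
    (X : Matrix (Fin N) (Fin m) ℝ)
    (hX1 : IsUnit (Xᵀ * Φ)) (hX2 : IsUnit (Xᵀ * L * Φ))
    (r₁ r₂ : Fin N → ℝ)
    (v₁ v₂ : Fin N → ℝ) (hv₁ : v₁ = L⁻¹.mulVec r₁) (hv₂ : v₂ = L⁻¹.mulVec r₂)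
    (h₁ : ¬ ∃ w : Fin m → ℝ, v₁ = Φ.mulVec w)
    (h₂ : ¬ ∃ w : Fin m → ℝ, v₂ = Φ.mulVec w)
    (vX₁ vX₂ : Fin N → ℝ)
    (hvX₁ : vX₁ = (Φ * (Xᵀ * L * Φ)⁻¹ * Xᵀ).mulVec r₁)
    (hvX₂ : vX₂ = (Φ * (Xᵀ * L * Φ)⁻¹ * Xᵀ).mulVec r₂) :
    wnorm ξ (v₁ - vX₁) / wnorm ξ (v₁ - Pr.mulVec v₁) =
      wnorm ξ (v₂ - vX₂) / wnorm ξ (v₂ - Pr.mulVec v₂) := by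
  subst hL hPr hv₁ hv₂ hvX₁ hvX₂
  have hL : IsUnit (1 - γ • P) := isUnit_one_sub_smul_of_mem_rowStochastic
    (mem_rowStochastic_iff_sum.mpr ⟨hP0, hP1⟩) (abs_lt.mpr ⟨by linarith, hγ1⟩)
  simpa only [obliqueProj, ← Matrix.mul_assoc] using stmt_19_general
    (by simp only [Fintype.card_fin]; omega) (wnorm_smul ξ) hL hX2
    (isUnit_transpose_mul_mul_same_of_posDef (PosDef.diagonal hξ) hΦ) h₁ h₂
end
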